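/- arXiv:1708.06718 — 4 statements merged into one kernel-verified Lean document; each statement's English description precedes it below -/
import Mathlib

section
/- For every integer m ≥ 5 there exists a 4-regular simple graph G on n = (6m − 12) · 2^m vertices whose edge expansion is at least 1/(12(m − 2)); that is, every nonempty set S of vertices with 2|S| ≤ n satisfies 12(m − 2) · |δ(S)| ≥ |S|. -/
/-!
The graph is a wrapped butterfly: vertices are pairs `(l, v)` of a level `l ∈ ℤ/k` and a word `v`,
and `(l, v)` is joined upwards to `(l + 1, v)` and `(l + 1, v + c l)`. Going once around the levels
adds to the word any chosen subset sum of the `c l`, so if these exhaust the words then every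
translation of the vertex group is a product of at most `2k` permutations, each of which moves all
vertices along a 2-factor. The number of elements of `S` leaving `S` is subadditive under
composition, and is at most `|δ(S)| / 2` for a 2-factor; averaged over all translations it equals
`|S| |Sᶜ| / |V|`, which is at least `|S| / 2`.
-/

/-- The edge boundary `δ(S)` of a vertex set `S`: the set of edges of `G` with
exactly one endpoint in `S`. -/
def edgeBoundary {V : Type*} (G : SimpleGraph V) (S : Set V) : Set (Sym2 V) :=
  {e ∈ G.edgeSet | ∃ a ∈ S, ∃ b ∉ S, e = s(a, b)}

open Equiv (Perm)

theorem ncard_preimage_equiv {α β : Type*} (e : α ≃ β) (S : Set β) :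
    (e ⁻¹' S).ncard = S.ncard := by
  rw [← e.image_symm_eq_preimage, Set.ncard_image_of_injective S e.symm.injective]

section EscapeCount

variable {V : Type*}

/-- The number of elements of `S` that the permutation `g` moves out of `S`. -/
noncomputable def escapeCount (S : Set V) (g : Perm V) : ℕ :=
  (S \ g ⁻¹' S).ncard

theorem escapeCount_one (S : Set V) : escapeCount S 1 = 0 := by
  simp [escapeCount]

theorem sum_escapeCount_addRight [Fintype V] [AddGroup V] (S : Set V) :
    ∑ t : V, escapeCount S (Equiv.addRight t) = S.ncard * Sᶜ.ncard := by
  let endpoints : (Σ t : V, ↥(S \ Equiv.addRight t ⁻¹' S)) ≃ S × ↥Sᶜ :=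
    { toFun p := (⟨p.2, p.2.2.1⟩, ⟨p.2 + p.1, p.2.2.2⟩)
      invFun q := ⟨-q.1 + q.2, q.1, q.1.2, fun h ↦ q.2.2 (by simpa using h)⟩
      left_inv _ := Sigma.subtype_ext (neg_add_cancel_left _ _) rfl
      right_inv _ := Prod.ext rfl (Subtype.ext (add_neg_cancel_left _ _)) }
  calc ∑ t : V, escapeCount S (Equiv.addRight t)
      = Nat.card (Σ t : V, ↥(S \ Equiv.addRight t ⁻¹' S)) := Nat.card_sigma.symm
    _ = Nat.card (S × ↥Sᶜ) := Nat.card_congr endpoints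
    _ = S.ncard * Sᶜ.ncard := Nat.card_prod _ _

variable [Finite V]

theorem escapeCount_mul_le (S : Set V) (g h : Perm V) :
    escapeCount S (g * h) ≤ escapeCount S g + escapeCount S h := by
  have hsub : S \ (g * h) ⁻¹' S ⊆ h ⁻¹' (S \ g ⁻¹' S) ∪ S \ h ⁻¹' S := by
    rintro x ⟨hx, hghx⟩
    by_cases hhx : h x ∈ S
    · exact .inl ⟨hhx, hghx⟩
    · exact .inr ⟨hx, hhx⟩
  calc escapeCount S (g * h)
      ≤ (h ⁻¹' (S \ g ⁻¹' S) ∪ S \ h ⁻¹' S).ncard := Set.ncard_le_ncard hsub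
    _ ≤ (h ⁻¹' (S \ g ⁻¹' S)).ncard + escapeCount S h := Set.ncard_union_le _ _
    _ = escapeCount S g + escapeCount S h := by
      simp only [ncard_preimage_equiv, escapeCount]

theorem escapeCount_list_prod_le (S : Set V) (L : List (Perm V)) :
    escapeCount S L.prod ≤ (L.map (escapeCount S)).sum := by
  induction L with
  | nil => simp [escapeCount_one]
  | cons g L ih =>
    rw [List.prod_cons, List.map_cons, List.sum_cons]
    exact (escapeCount_mul_le S g L.prod).trans (Nat.add_le_add_left ih _)

theorem ncard_symmDiff_preimage_perm (S : Set V) (g : Perm V) :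
    (symmDiff S (g ⁻¹' S)).ncard = 2 * escapeCount S g := by
  have hout := Set.ncard_inter_add_ncard_sdiff_eq_ncard S (g ⁻¹' S)
  have hin := Set.ncard_inter_add_ncard_sdiff_eq_ncard (g ⁻¹' S) S
  rw [ncard_preimage_equiv, Set.inter_comm] at hin
  rw [Set.symmDiff_def, Set.ncard_union_eq disjoint_sdiff_sdiff, escapeCount]
  lia

theorem ncard_le_of_two_mul_escapeCount_addRight_le [AddGroup V] {S : Set V} {C : ℕ}
    (hS : 2 * S.ncard ≤ Nat.card V) (hC : ∀ t, 2 * escapeCount S (Equiv.addRight t) ≤ C) :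
    S.ncard ≤ C := by
  have := Fintype.ofFinite V
  have hcompl : Nat.card V ≤ 2 * Sᶜ.ncard := by
    have := Set.ncard_add_ncard_compl S
    lia
  refine le_of_mul_le_mul_left ?_ (Nat.card_pos (α := V))
  calc Nat.card V * S.ncard
      ≤ 2 * Sᶜ.ncard * S.ncard := Nat.mul_le_mul_right _ hcompl
    _ = ∑ t, 2 * escapeCount S (Equiv.addRight t) := by
      rw [← Finset.mul_sum, sum_escapeCount_addRight]
      ring
    _ ≤ ∑ _t : V, C := Finset.sum_le_sum fun t _ ↦ hC t
    _ = Nat.card V * C := by simp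

end EscapeCount

section TwoFactor

variable {V : Type*}

/-- The permutation `g` moves every vertex along an edge of `G` and has no 2-cycles, so that its
cycles form a 2-factor of `G`. -/
structure IsTwoFactorPerm (G : SimpleGraph V) (g : Perm V) : Prop where
  adj (x : V) : G.Adj x (g x)
  apply_apply_ne (x : V) : g (g x) ≠ x

theorem IsTwoFactorPerm.injective_edge {G : SimpleGraph V} {g : Perm V}
    (hg : IsTwoFactorPerm G g) : Function.Injective fun x ↦ s(x, g x) := by
  intro x y hxy
  rcases Sym2.eq_iff.1 hxy with ⟨h, -⟩ | ⟨hx, hy⟩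
  · exact h
  · exact absurd (hy ▸ hx.symm) (hg.apply_apply_ne x)

variable [Finite V]

theorem IsTwoFactorPerm.two_mul_escapeCount_le {G : SimpleGraph V} {g : Perm V}
    (hg : IsTwoFactorPerm G g) (S : Set V) :
    2 * escapeCount S g ≤ (edgeBoundary G S).ncard := by
  rw [← ncard_symmDiff_preimage_perm]
  refine Set.ncard_le_ncard_of_injOn (fun x ↦ s(x, g x)) ?_ hg.injective_edge.injOn
  rintro x (⟨hx, hgx⟩ | ⟨hgx, hx⟩)
  · exact ⟨hg.adj x, x, hx, g x, hgx, rfl⟩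
  · exact ⟨hg.adj x, g x, hgx, x, hx, Sym2.eq_swap⟩

theorem ncard_le_mul_ncard_edgeBoundary_of_addRight_eq_prod [AddGroup V] {G : SimpleGraph V}
    {n : ℕ} (hG : ∀ t : V, ∃ L : List (Perm V),
      L.length ≤ n ∧ (∀ g ∈ L, IsTwoFactorPerm G g) ∧ L.prod = Equiv.addRight t)
    {S : Set V} (hS : 2 * S.ncard ≤ Nat.card V) :
    S.ncard ≤ n * (edgeBoundary G S).ncard := by
  refine ncard_le_of_two_mul_escapeCount_addRight_le hS fun t ↦ ?_
  obtain ⟨L, hlength, hL, hprod⟩ := hG t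
  calc 2 * escapeCount S (Equiv.addRight t)
      ≤ 2 * (L.map (escapeCount S)).sum := by
        rw [← hprod]
        exact Nat.mul_le_mul_left 2 (escapeCount_list_prod_le S L)
    _ = (L.map fun g ↦ 2 * escapeCount S g).sum := (List.sum_map_mul_left ..).symm
    _ ≤ L.length * (edgeBoundary G S).ncard := by
        simpa using List.sum_le_card_nsmul (L.map fun g ↦ 2 * escapeCount S g) _
          (by simpa using fun g hg ↦ (hL g hg).two_mul_escapeCount_le S)
    _ ≤ n * (edgeBoundary G S).ncard := Nat.mul_le_mul_right _ hlength

end TwoFactor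

theorem sum_range_add_natCast {M : Type*} [AddCommMonoid M] {k : ℕ} [NeZero k] (d : ZMod k → M)
    (l : ZMod k) : ∑ s ∈ Finset.range k, d (l + s) = ∑ x, d x := by
  rw [← Equiv.sum_comp (Equiv.addLeft l) d]
  exact Finset.sum_nbij' (fun s ↦ (s : ZMod k)) ZMod.val (by simp)
    (fun x _ ↦ Finset.mem_range.2 x.val_lt)
    (fun s hs ↦ ZMod.val_natCast_of_lt (Finset.mem_range.1 hs)) (by simp) (by simp)

section Butterfly

variable {k : ℕ} {W : Type*} [AddCommGroup W]

/-- The generalized wrapped butterfly graph on `ZMod k` levels: `(l, v)` is joined to `(l + 1, v)`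
and `(l + 1, v + c l)`. The usual wrapped butterfly has words `v` in `(ℤ/2)ᵏ` and `c l` the `l`-th
unit vector. -/
def butterflyGraph (c : ZMod k → W) : SimpleGraph (ZMod k × W) :=
  SimpleGraph.fromRel fun x y ↦ y.1 = x.1 + 1 ∧ (y.2 = x.2 ∨ y.2 = x.2 + c x.1)

/-- The permutation of `ZMod k × W` that moves every vertex one level up and adds `d l` to the words
at level `l`. -/
def levelStep (d : ZMod k → W) : Perm (ZMod k × W) :=
  Equiv.prodShear (Equiv.addRight 1) fun l ↦ Equiv.addRight (d l)

theorem levelStep_apply (d : ZMod k → W) (x : ZMod k × W) :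
    levelStep d x = (x.1 + 1, x.2 + d x.1) := rfl

theorem levelStep_pow_apply (d : ZMod k → W) (n : ℕ) (x : ZMod k × W) :
    (levelStep d ^ n) x = (x.1 + n, x.2 + ∑ s ∈ Finset.range n, d (x.1 + s)) := by
  induction n with
  | zero => simp
  | succ n ih =>
    rw [pow_succ', Perm.mul_apply, ih, levelStep_apply, Finset.sum_range_succ]
    simp [add_assoc]

theorem levelStep_zero_pow_val_mul_levelStep_pow [NeZero k] (a : ZMod k) (d : ZMod k → W) :
    levelStep 0 ^ a.val * levelStep d ^ k = Equiv.addRight (a, ∑ l, d l) := by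
  ext1 x
  simp [Perm.mul_apply, levelStep_pow_apply, sum_range_add_natCast, Prod.ext_iff]

theorem isTwoFactorPerm_levelStep (h2 : (2 : ZMod k) ≠ 0) {c d : ZMod k → W}
    (hd : ∀ l, d l = 0 ∨ d l = c l) : IsTwoFactorPerm (butterflyGraph c) (levelStep d) where
  adj x := by
    have := nontrivial_of_ne _ _ h2
    refine (SimpleGraph.fromRel_adj _ _ _).2 ⟨?_, .inl ⟨rfl, ?_⟩⟩
    · simp [levelStep_apply, Prod.ext_iff]
    · exact (hd x.1).imp (by simp [levelStep_apply, ·]) (by simp [levelStep_apply, ·])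
  apply_apply_ne x hx := by
    have hlevel : x.1 + 1 + 1 = x.1 := congrArg Prod.fst hx
    rw [add_assoc, one_add_one_eq_two, add_eq_left] at hlevel
    exact h2 hlevel

theorem neighborSet_butterflyGraph [Nontrivial (ZMod k)] (c : ZMod k → W) (l : ZMod k) (v : W) :
    (butterflyGraph c).neighborSet (l, v) =
      {l + 1} ×ˢ {v, v + c l} ∪ {l - 1} ×ˢ {v, v - c (l - 1)} := by
  ext ⟨l', v'⟩
  have hup (h : l' = l + 1) : (l, v) ≠ (l', v') := by simp [h]
  have hdown (h : l = l' + 1) : (l, v) ≠ (l', v') := by simp [h]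
  simp only [butterflyGraph, SimpleGraph.mem_neighborSet, SimpleGraph.fromRel_adj, Set.mem_union,
    Set.mem_prod, Set.mem_singleton_iff, Set.mem_insert_iff]
  grind

theorem card_neighborSet_butterflyGraph (h2 : (2 : ZMod k) ≠ 0) {c : ZMod k → W}
    (hc : ∀ l, c l ≠ 0) (x : ZMod k × W) :
    Nat.card ((butterflyGraph c).neighborSet x) = 4 := by
  have := nontrivial_of_ne _ _ h2
  obtain ⟨l, v⟩ := x
  have hlevel : l + 1 ≠ l - 1 := by
    intro h
    apply h2
    linear_combination h
  have hup : v ≠ v + c l := by simpa using hc l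
  have hdown : v ≠ v - c (l - 1) := fun h ↦ hc (l - 1) (sub_eq_self.1 h.symm)
  rw [neighborSet_butterflyGraph, Nat.card_coe_set_eq, Set.ncard_union_eq, Set.ncard_prod,
    Set.ncard_prod, Set.ncard_singleton, Set.ncard_singleton, Set.ncard_pair hup,
    Set.ncard_pair hdown]
  exact Set.disjoint_prod.2 (.inl (by simpa using hlevel))

theorem ncard_le_mul_ncard_edgeBoundary_butterflyGraph [NeZero k] [Finite W]
    (h2 : (2 : ZMod k) ≠ 0) {c : ZMod k → W}
    (hc : ∀ w, ∃ A : Finset (ZMod k), ∑ l ∈ A, c l = w)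
    {S : Set (ZMod k × W)} (hS : 2 * S.ncard ≤ Nat.card (ZMod k × W)) :
    S.ncard ≤ 2 * k * (edgeBoundary (butterflyGraph c) S).ncard := by
  refine ncard_le_mul_ncard_edgeBoundary_of_addRight_eq_prod (fun ⟨a, w⟩ ↦ ?_) hS
  obtain ⟨A, rfl⟩ := hc w
  let d : ZMod k → W := (A : Set (ZMod k)).indicator c
  refine ⟨.replicate a.val (levelStep 0) ++ .replicate k (levelStep d), ?_, ?_, ?_⟩
  · have := a.val_lt
    simp only [List.length_append, List.length_replicate]
    lia
  · intro g hg
    rcases List.mem_append.1 hg with hg | hg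
    · rw [List.eq_of_mem_replicate hg]
      exact isTwoFactorPerm_levelStep h2 fun _ ↦ .inl rfl
    · rw [List.eq_of_mem_replicate hg]
      exact isTwoFactorPerm_levelStep h2 fun l ↦ Set.indicator_eq_zero_or_self _ c l
  · have hsum : ∑ l, d l = ∑ l ∈ A, c l := Finset.sum_indicator_subset c A.subset_univ
    rw [List.prod_append, List.prod_replicate, List.prod_replicate,
      levelStep_zero_pow_val_mul_levelStep_pow, hsum]

end Butterfly

theorem exists_sum_single_eq {ι α : Type*} [Finite α] [DecidableEq α] {f : ι → α}
    (hf : f.Surjective) (w : α → ZMod 2) :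
    ∃ A : Finset ι, ∑ l ∈ A, Pi.single (f l) 1 = w := by
  have := Fintype.ofFinite α
  have hentry (z : ZMod 2) : (if z = 1 then 1 else 0) = z := by decide +revert
  let support : Finset α := {i | w i = 1}
  refine ⟨support.map ⟨f.surjInv hf, f.injective_surjInv hf⟩, ?_⟩
  calc ∑ l ∈ support.map ⟨f.surjInv hf, f.injective_surjInv hf⟩, Pi.single (f l) 1
      = ∑ i ∈ support, Pi.single i 1 := by simp [Function.surjInv_eq hf]
    _ = ∑ i, Pi.single i (w i) := by
      rw [Finset.sum_filter]
      refine Finset.sum_congr rfl fun i _ ↦ ?_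
      rw [← Pi.single_zero i, ← apply_ite, hentry]
    _ = w := Finset.univ_sum_single w

theorem exists_four_regular_graph_with_expansion_general {k m : ℕ} (hk : 3 ≤ k) (hm : 0 < m)
    (hmk : m ≤ k) :
    ∃ (V : Type) (G : SimpleGraph V), Finite V ∧
      Nat.card V = k * 2 ^ m ∧
      (∀ v : V, Nat.card (G.neighborSet v) = 4) ∧
      ∀ S : Set V, 2 * S.ncard ≤ k * 2 ^ m → S.ncard ≤ 2 * k * (edgeBoundary G S).ncard := by
  have : NeZero k := ⟨by lia⟩
  have : NeZero m := ⟨hm.ne'⟩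
  have h2 : (2 : ZMod k) ≠ 0 := by
    intro h
    have := Nat.le_of_dvd two_pos ((ZMod.natCast_eq_zero_iff 2 k).1 h)
    lia
  have hcard : Nat.card (ZMod k × (Fin m → ZMod 2)) = k * 2 ^ m := by simp
  obtain ⟨f, hf⟩ : ∃ f : ZMod k → Fin m, f.Surjective :=
    Function.exists_surjective_iff.2
      ⟨⟨0⟩, Function.Embedding.nonempty_of_card_le (by simpa using hmk)⟩
  let c : ZMod k → Fin m → ZMod 2 := fun l ↦ Pi.single (f l) 1
  refine ⟨ZMod k × (Fin m → ZMod 2), butterflyGraph c, inferInstance, hcard,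
    card_neighborSet_butterflyGraph h2 fun l ↦ ?_, fun S hS ↦ ?_⟩
  · simp [c]
  · exact ncard_le_mul_ncard_edgeBoundary_butterflyGraph h2 (exists_sum_single_eq hf)
      (hcard ▸ hS)

/-- For every `m ≥ 5` there is a `4`-regular simple graph on
`n = (6m − 12)·2^m` vertices whose edge expansion is at least `1/(12(m−2))`:
every nonempty vertex set `S` with `2|S| ≤ n` satisfies
`12(m−2)·|δ(S)| ≥ |S|`. -/
theorem exists_four_regular_graph_with_expansion (m : ℕ) (hm : 5 ≤ m) :
    ∃ (V : Type) (G : SimpleGraph V), Finite V ∧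
      Nat.card V = (6 * m - 12) * 2 ^ m ∧
      (∀ v : V, Nat.card (G.neighborSet v) = 4) ∧
      ∀ S : Set V, S.Nonempty → 2 * S.ncard ≤ (6 * m - 12) * 2 ^ m →
        S.ncard ≤ 12 * (m - 2) * (edgeBoundary G S).ncard := by
  obtain ⟨V, G, hfin, hcard, hreg, hexp⟩ := exists_four_regular_graph_with_expansion_general
    (k := 6 * m - 12) (m := m) (by lia) (by lia) (by lia)
  have hconst : 12 * (m - 2) = 2 * (6 * m - 12) := by lia
  exact ⟨V, G, hfin, hcard, hreg, fun S _ hS ↦ hconst ▸ hexp S hS⟩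
end

section
/- For every integer m ≥ 5 and every real constant 0 < c < 1/2, there exists a 4-regular simple graph G on n = (6m − 12) · 2^m vertices such that every separator (A, B, C) of G with separation constant c satisfies 48(m − 2) · |C| ≥ c · n. -/
section ExitCount

variable {V : Type*}

/-- The number of elements of `A` that the permutation `σ` moves out of `A`. For fixed `A` it is a
length function on the permutations, which measures how much they mix `A` with its complement. -/
noncomputable def exitCount (A : Set V) (σ : Equiv.Perm V) : ℕ :=
  (A \ σ ⁻¹' A).ncard

theorem exitCount_one (A : Set V) : exitCount A 1 = 0 := by
  simp [exitCount]

theorem exitCount_mul_le [Finite V] (A : Set V) (σ τ : Equiv.Perm V) :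
    exitCount A (σ * τ) ≤ exitCount A σ + exitCount A τ := by
  have hsub : A \ (σ * τ) ⁻¹' A ⊆ τ ⁻¹' (A \ σ ⁻¹' A) ∪ A \ τ ⁻¹' A := by
    rintro a ⟨ha, hστ⟩
    by_cases hτ : τ a ∈ A
    · exact Or.inl ⟨hτ, hστ⟩
    · exact Or.inr ⟨ha, hτ⟩
  have hpre : (τ ⁻¹' (A \ σ ⁻¹' A)).ncard = exitCount A σ :=
    Set.ncard_preimage_of_injective_subset_range τ.injective (by simp)
  calc exitCount A (σ * τ)
      ≤ (τ ⁻¹' (A \ σ ⁻¹' A) ∪ A \ τ ⁻¹' A).ncard := Set.ncard_le_ncard hsub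
    _ ≤ (τ ⁻¹' (A \ σ ⁻¹' A)).ncard + exitCount A τ := Set.ncard_union_le _ _
    _ = exitCount A σ + exitCount A τ := by rw [hpre]

theorem exitCount_pow_le [Finite V] (A : Set V) (σ : Equiv.Perm V) (t : ℕ) :
    exitCount A (σ ^ t) ≤ t * exitCount A σ := by
  induction t with
  | zero => simp [exitCount_one]
  | succ t ih =>
    calc exitCount A (σ ^ (t + 1))
        ≤ exitCount A (σ ^ t) + exitCount A σ := pow_succ σ t ▸ exitCount_mul_le A _ _
      _ ≤ t * exitCount A σ + exitCount A σ := by gcongr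
      _ = (t + 1) * exitCount A σ := by ring

theorem exitCount_le_ncard_of_adj [Finite V] {G : SimpleGraph V} {A C : Set V}
    (hC : ∀ a ∈ A, ∀ v, G.Adj a v → v ∈ A ∪ C) {σ : Equiv.Perm V}
    (hσ : ∀ v, σ v = v ∨ G.Adj v (σ v)) : exitCount A σ ≤ C.ncard := by
  refine Set.ncard_le_ncard_of_injOn σ ?_ σ.injective.injOn
  rintro a ⟨ha, hσa⟩
  rcases hσ a with hfix | hadj
  · exact absurd (show σ a ∈ A by rwa [hfix]) hσa
  · exact (hC a ha _ hadj).resolve_left hσa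

theorem sum_exitCount_addRight [AddGroup V] [Fintype V] (A : Set V) :
    ∑ p, exitCount A (Equiv.addRight p) = A.ncard * Aᶜ.ncard := by
  classical
  lift A to Finset V using A.toFinite
  have hexit (p : V) :
      exitCount (A : Set V) (Equiv.addRight p) =
        (A.bipartiteAbove (fun p a ↦ a + p ∉ A) p).card := by
    rw [exitCount, ← Set.ncard_coe_finset, Finset.coe_bipartiteAbove]
    rfl
  have hbelow (a : V) :
      (Finset.univ.bipartiteBelow (fun p a ↦ a + p ∉ A) a).card = (A : Set V)ᶜ.ncard := by
    rw [← Set.ncard_coe_finset, Finset.coe_bipartiteBelow]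
    simp only [Finset.mem_univ, true_and]
    exact Set.ncard_preimage_of_injective_subset_range (f := (a + ·)) (s := (A : Set V)ᶜ)
      (add_right_injective a) (by simp [(add_left_surjective a).range_eq])
  simp_rw [hexit, Finset.sum_card_bipartiteAbove_eq_sum_card_bipartiteBelow, hbelow]
  simp

theorem ncard_le_two_mul_of_exitCount_addRight_le [AddGroup V] [Finite V] {A : Set V} {d : ℕ}
    (hA : A.ncard ≤ Aᶜ.ncard) (hd : ∀ p, exitCount A (Equiv.addRight p) ≤ d) :
    A.ncard ≤ 2 * d := by
  have := Fintype.ofFinite V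
  have hcard : A.ncard + Aᶜ.ncard = Nat.card V := Set.ncard_add_ncard_compl A
  have hprod : A.ncard * Aᶜ.ncard ≤ Nat.card V * d := by
    rw [← sum_exitCount_addRight, Nat.card_eq_fintype_card]
    exact Finset.sum_le_card_nsmul _ _ d fun p _ ↦ hd p
  refine Nat.le_of_mul_le_mul_right ?_ (Nat.card_pos (α := V))
  calc A.ncard * Nat.card V ≤ A.ncard * (2 * Aᶜ.ncard) := by gcongr; lia
    _ = 2 * (A.ncard * Aᶜ.ncard) := by ring
    _ ≤ 2 * (Nat.card V * d) := by gcongr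
    _ = 2 * d * Nat.card V := by ring

end ExitCount

/-- The ring of the Cayley graphs of `H` with respect to the connection sets `S i`, `i : ZMod k`:
inside the `i`-th copy of `H`, `x` is joined to `x + s` for `s ∈ S i`, and equal elements of
consecutive copies are joined. Since `SimpleGraph.fromRel` symmetrizes and drops loops, `S i` may be
any set. -/
def cayleyRing {k : ℕ} {H : Type*} [AddGroup H] (S : ZMod k → Set H) :
    SimpleGraph (ZMod k × H) :=
  .fromRel fun u v ↦ v = u + (1, 0) ∨ ∃ s ∈ S u.1, v = u + (0, s)

section CayleyRing

variable {k : ℕ} {H : Type*}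

theorem neighborSet_cayleyRing [AddGroup H] (hk : 2 ≤ k) {S : ZMod k → Set H}
    (hneg : ∀ i, ∀ s ∈ S i, -s ∈ S i) (hzero : ∀ i, 0 ∉ S i) (u : ZMod k × H) :
    (cayleyRing S).neighborSet u =
      {u + (1, 0), u - (1, 0)} ∪ (fun s ↦ u + (0, s)) '' S u.1 := by
  have : Fact (1 < k) := ⟨hk⟩
  ext v
  simp only [cayleyRing, SimpleGraph.mem_neighborSet, SimpleGraph.fromRel_adj, Set.mem_union,
    Set.mem_insert_iff, Set.mem_singleton_iff, Set.mem_image]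
  constructor
  · rintro ⟨-, (rfl | ⟨s, hs, rfl⟩) | (rfl | ⟨s, hs, rfl⟩)⟩
    · exact Or.inl (Or.inl rfl)
    · exact Or.inr ⟨s, hs, rfl⟩
    · exact Or.inl (Or.inr (by simp))
    · exact Or.inr ⟨-s, by simpa using hneg _ s hs, by simp [add_assoc]⟩
  · rintro ((rfl | rfl) | ⟨s, hs, rfl⟩)
    · exact ⟨by simp, Or.inl (Or.inl rfl)⟩
    · exact ⟨by simp [eq_sub_iff_add_eq], Or.inr (Or.inl (by simp))⟩
    · have hs0 : s ≠ 0 := fun h0 ↦ hzero _ (h0 ▸ hs)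
      exact ⟨by simpa using hs0, Or.inl (Or.inr ⟨s, hs, rfl⟩)⟩

theorem ncard_neighborSet_cayleyRing [AddGroup H] [Finite H] (hk : 3 ≤ k) {S : ZMod k → Set H}
    (hneg : ∀ i, ∀ s ∈ S i, -s ∈ S i) (hzero : ∀ i, 0 ∉ S i) (u : ZMod k × H) :
    ((cayleyRing S).neighborSet u).ncard = 2 + (S u.1).ncard := by
  have : Fact (1 < k) := ⟨by lia⟩
  have : Fact (2 < k) := ⟨hk⟩
  have hring : u + (1, 0) ≠ u - (1, 0) := by
    simp [sub_eq_add_neg, Prod.ext_iff, ZMod.neg_one_ne_one.symm]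
  have hdisj : Disjoint {u + (1, 0), u - (1, 0)} ((fun s ↦ u + (0, s)) '' S u.1) := by
    rw [Set.disjoint_left]
    rintro _ (rfl | rfl) ⟨s, -, h⟩ <;> simp [Prod.ext_iff, eq_sub_iff_add_eq] at h
  have hinj : Function.Injective fun s : H ↦ u + (0, s) := fun s t h ↦ by simpa using h
  rw [neighborSet_cayleyRing (by lia) hneg hzero, Set.ncard_union_eq hdisj, Set.ncard_pair hring,
    Set.ncard_image_of_injective _ hinj]

theorem sum_range_add_natCast_eq_sum [NeZero k] [AddCommMonoid H] (w : ZMod k → H) (i : ZMod k) :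
    ∑ t ∈ Finset.range k, w (i + t) = ∑ j, w j := by
  rw [← Equiv.sum_comp (Equiv.addLeft i) w]
  exact Finset.sum_nbij' (fun t ↦ (t : ZMod k)) ZMod.val (by simp) (by simp [ZMod.val_lt])
    (fun t ht ↦ ZMod.val_cast_of_lt (Finset.mem_range.mp ht)) (by simp) (by simp)

/-- The permutation of the ring of copies of `H` that translates the `i`-th copy by `w i`.
It is one step along the edges inside the copies if each `w i` is `0` or in the connection set. -/
def layerTranslation [AddGroup H] (w : ZMod k → H) : Equiv.Perm (ZMod k × H) :=
  Equiv.prodShear (Equiv.refl _) fun i ↦ Equiv.addRight (w i)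

theorem addRight_mul_layerTranslation_pow_apply [AddCommGroup H] (w : ZMod k → H) (t : ℕ)
    (u : ZMod k × H) :
    ((Equiv.addRight (1, 0) * layerTranslation w : Equiv.Perm (ZMod k × H)) ^ t) u =
      (u.1 + t, u.2 + ∑ s ∈ Finset.range t, w (u.1 + s)) := by
  induction t with
  | zero => simp
  | succ t ih =>
    rw [pow_succ', Equiv.Perm.mul_apply, ih]
    simp [layerTranslation, Finset.sum_range_succ, add_assoc]

theorem addRight_mul_layerTranslation_pow_self [NeZero k] [AddCommGroup H] (w : ZMod k → H) :
    (Equiv.addRight (1, 0) * layerTranslation w) ^ k = Equiv.addRight (0, ∑ i, w i) := by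
  ext1 u
  rw [addRight_mul_layerTranslation_pow_apply, sum_range_add_natCast_eq_sum]
  simp [Prod.ext_iff]

theorem exitCount_addRight_le_of_cayleyRing [NeZero k] [AddCommGroup H] [Finite H]
    {S : ZMod k → Set H} {A C : Set (ZMod k × H)}
    (hC : ∀ a ∈ A, ∀ v, (cayleyRing S).Adj a v → v ∈ A ∪ C)
    {w : ZMod k → H} (hw : ∀ i, w i = 0 ∨ w i ∈ S i) (j : ZMod k) :
    exitCount A (Equiv.addRight (j, ∑ i, w i)) ≤ 3 * k * C.ncard := by
  have hshift : exitCount A (Equiv.addRight (1, 0)) ≤ C.ncard :=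
    exitCount_le_ncard_of_adj hC fun v ↦ or_iff_not_imp_left.mpr fun hne ↦
      (SimpleGraph.fromRel_adj _ _ _).mpr ⟨Ne.symm hne, Or.inl (Or.inl rfl)⟩
  have hlayer : exitCount A (layerTranslation w) ≤ C.ncard := by
    refine exitCount_le_ncard_of_adj hC fun v ↦ or_iff_not_imp_left.mpr fun hne ↦
      (SimpleGraph.fromRel_adj _ _ _).mpr ⟨Ne.symm hne, Or.inl (Or.inr ⟨w v.1, ?_, ?_⟩)⟩
    · refine (hw v.1).resolve_left fun h0 ↦ hne ?_
      simp [layerTranslation, h0]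
    · simp [layerTranslation, Prod.ext_iff]
  have hroute : Equiv.addRight (j, ∑ i, w i) =
      Equiv.addRight (1, 0) ^ j.val * (Equiv.addRight (1, 0) * layerTranslation w) ^ k := by
    rw [addRight_mul_layerTranslation_pow_self, Equiv.nsmul_addRight, ← Equiv.addRight_add]
    simp
  calc exitCount A (Equiv.addRight (j, ∑ i, w i))
      ≤ exitCount A (Equiv.addRight (1, 0) ^ j.val) +
          exitCount A ((Equiv.addRight (1, 0) * layerTranslation w) ^ k) :=
        hroute ▸ exitCount_mul_le A _ _
    _ ≤ j.val * exitCount A (Equiv.addRight (1, 0)) +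
          k * (exitCount A (Equiv.addRight (1, 0)) + exitCount A (layerTranslation w)) := by
        gcongr
        · exact exitCount_pow_le A _ _
        · exact (exitCount_pow_le A _ _).trans (by gcongr; exact exitCount_mul_le A _ _)
    _ ≤ k * C.ncard + k * (C.ncard + C.ncard) := by
        gcongr
        exact (ZMod.val_lt j).le
    _ = 3 * k * C.ncard := by ring

theorem ncard_le_of_cayleyRing [NeZero k] [AddCommGroup H] [Finite H] {S : ZMod k → Set H}
    (hS : ∀ y, ∃ w : ZMod k → H, (∀ i, w i = 0 ∨ w i ∈ S i) ∧ ∑ i, w i = y)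
    {A C : Set (ZMod k × H)} (hC : ∀ a ∈ A, ∀ v, (cayleyRing S).Adj a v → v ∈ A ∪ C)
    (hA : A.ncard ≤ Aᶜ.ncard) : A.ncard ≤ 6 * k * C.ncard := by
  have hexit (p : ZMod k × H) : exitCount A (Equiv.addRight p) ≤ 3 * k * C.ncard := by
    obtain ⟨j, y⟩ := p
    obtain ⟨w, hw, rfl⟩ := hS y
    exact exitCount_addRight_le_of_cayleyRing hC hw j
  calc A.ncard ≤ 2 * (3 * k * C.ncard) := ncard_le_two_mul_of_exitCount_addRight_le hA hexit
    _ = 6 * k * C.ncard := by ring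

end CayleyRing

theorem exists_sum_eq_of_surjective {κ ι : Type*} [Fintype κ] [Finite ι] [DecidableEq ι]
    {f : κ → ι} (hf : f.Surjective) (y : ι → ZMod 2) :
    ∃ w : κ → ι → ZMod 2, (∀ i, w i = 0 ∨ w i = Pi.single (f i) 1) ∧ ∑ i, w i = y := by
  classical
  have := Fintype.ofFinite ι
  obtain ⟨g, hg⟩ := hf.hasRightInverse
  refine ⟨fun i ↦ if g (f i) = i then Pi.single (f i) (y (f i)) else 0, fun i ↦ ?_, ?_⟩
  · have hbit : ∀ b : ZMod 2, b = 0 ∨ b = 1 := by decide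
    dsimp only
    split_ifs
    · rcases hbit (y (f i)) with hy | hy <;> simp [hy]
    · exact Or.inl rfl
  · rw [← Fintype.sum_of_injective g hg.injective (fun j ↦ Pi.single j (y j)),
      Finset.univ_sum_single]
    · exact fun i hi ↦ if_neg fun h ↦ hi ⟨f i, h⟩
    · intro j
      simp [hg j]

section CoordinateFlips

variable {k : ℕ} {ι : Type*} [DecidableEq ι]

/-- The connection sets in the cube `ι → ZMod 2` for which the `i`-th copy of the cube in the ring
keeps just its edges in the two directions `f i` and `g i`. -/
def coordinateFlips (f g : ZMod k → ι) (i : ZMod k) : Set (ι → ZMod 2) :=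
  {Pi.single (f i) 1, Pi.single (g i) 1}

theorem ncard_neighborSet_cayleyRing_coordinateFlips [Finite ι] (hk : 3 ≤ k) {f g : ZMod k → ι}
    (hfg : ∀ i, f i ≠ g i) (u : ZMod k × (ι → ZMod 2)) :
    ((cayleyRing (coordinateFlips f g)).neighborSet u).ncard = 4 := by
  have hsingle : (Pi.single (f u.1) 1 : ι → ZMod 2) ≠ Pi.single (g u.1) 1 := fun h ↦ by
    simpa [hfg u.1] using congrFun h (f u.1)
  have hneg : ∀ i, ∀ s ∈ coordinateFlips f g i, -s ∈ coordinateFlips f g i := by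
    simp [coordinateFlips, ← Pi.single_neg]
  have hzero : ∀ i, 0 ∉ coordinateFlips f g i := by
    simp [coordinateFlips, eq_comm (a := (0 : ι → ZMod 2))]
  rw [ncard_neighborSet_cayleyRing hk hneg hzero, coordinateFlips, Set.ncard_pair hsingle]

theorem ncard_le_of_cayleyRing_coordinateFlips [NeZero k] [Finite ι] {f g : ZMod k → ι}
    (hf : f.Surjective) {A C : Set (ZMod k × (ι → ZMod 2))}
    (hC : ∀ a ∈ A, ∀ v, (cayleyRing (coordinateFlips f g)).Adj a v → v ∈ A ∪ C)
    (hA : A.ncard ≤ Aᶜ.ncard) : A.ncard ≤ 6 * k * C.ncard := by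
  refine ncard_le_of_cayleyRing (fun y ↦ ?_) hC hA
  obtain ⟨w, hw, hsum⟩ := exists_sum_eq_of_surjective hf y
  exact ⟨w, fun i ↦ (hw i).imp_right Or.inl, hsum⟩

end CoordinateFlips

theorem exists_four_regular_graph_with_large_separators_general
    (m k : ℕ) (hm : 2 ≤ m) (hk : 3 ≤ k) (hmk : m ≤ k) :
    ∃ (V : Type) (G : SimpleGraph V), Finite V ∧
      Nat.card V = k * 2 ^ m ∧
      (∀ v : V, Nat.card (G.neighborSet v) = 4) ∧
      ∀ A B C : Set V,
        Disjoint A B → A ∪ B ∪ C = Set.univ → A.ncard ≤ B.ncard →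
        (∀ a ∈ A, ∀ b ∈ B, ¬ G.Adj a b) → A.ncard ≤ 6 * k * C.ncard := by
  have : NeZero k := ⟨by lia⟩
  have : Nontrivial (Fin m) := Fin.nontrivial_iff_two_le.mpr hm
  obtain ⟨e⟩ : Nonempty (Fin m ↪ ZMod k) :=
    Function.Embedding.nonempty_of_card_le (by simpa [ZMod.card] using hmk)
  obtain ⟨f, hf⟩ : ∃ f : ZMod k → Fin m, f.Surjective := ⟨_, Function.invFun_surjective e.injective⟩
  choose g hgf using fun i ↦ exists_ne (f i)
  refine ⟨ZMod k × (Fin m → ZMod 2), cayleyRing (coordinateFlips f g), inferInstance, by simp,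
    ncard_neighborSet_cayleyRing_coordinateFlips hk fun i ↦ (hgf i).symm, ?_⟩
  intro A B C hAB hcover hle hsep
  refine ncard_le_of_cayleyRing_coordinateFlips (g := g) hf (fun a ha v hav ↦ ?_)
    (hle.trans (Set.ncard_le_ncard hAB.subset_compl_left))
  rcases hcover.ge (Set.mem_univ v) with (hv | hv) | hv
  · exact Or.inl hv
  · exact absurd hav (hsep a ha v hv)
  · exact Or.inr hv

/-- For every `m ≥ 5` and every `0 < c < 1/2` there is a
`4`-regular simple graph on `n = (6m − 12)·2^m` vertices such that every
separator `(A, B, C)` with separation constant `c` satisfies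
`48(m−2)·|C| ≥ c·n`. -/
theorem exists_four_regular_graph_with_large_separators
    (m : ℕ) (hm : 5 ≤ m) (c : ℝ) (hc0 : 0 < c) (hc : c < 1 / 2) :
    ∃ (V : Type) (G : SimpleGraph V), Finite V ∧
      Nat.card V = (6 * m - 12) * 2 ^ m ∧
      (∀ v : V, Nat.card (G.neighborSet v) = 4) ∧
      ∀ A B C : Set V,
        Disjoint A B → Disjoint A C → Disjoint B C → A ∪ B ∪ C = Set.univ →
        c * (((6 * m - 12) * 2 ^ m : ℕ) : ℝ) ≤ A.ncard → A.ncard ≤ B.ncard →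
        (∀ a ∈ A, ∀ b ∈ B, ¬ G.Adj a b) →
        c * (((6 * m - 12) * 2 ^ m : ℕ) : ℝ) ≤ (48 * (m - 2) * C.ncard : ℕ) := by
  obtain ⟨V, G, hV, hcard, hdeg, hG⟩ := exists_four_regular_graph_with_large_separators_general
    m (6 * m - 12) (by lia) (by lia) (by lia)
  refine ⟨V, G, hV, hcard, hdeg, fun A B C hAB _ _ hcover hcA hle hsep ↦ hcA.trans ?_⟩
  exact_mod_cast (hG A B C hAB hcover hle hsep).trans (Nat.mul_le_mul_right _ (by lia))
end

section
/- For every integer m ≥ 6 and every real constant 0 < c < 1/3, there exists a 4-regular simple graph G on n = (6m − 12) · 2^m vertices such that: (i) every separator (A, B, C) of G with separation constant c satisfies 48(m − 2) · |C| ≥ c · n; and (ii) there exists a partition of the vertex set into pairwise disjoint sets A, B, C with no edge of G joining a vertex of A to a vertex of B, with |A| ≥ n/3, |B| ≥ n/3, and m · |C| ≤ n. -/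
/-!
Replace every vertex of the `m`-dimensional hypercube by a copy of the Möbius ladder on
`N = 6 (m - 2)` vertices, and label the ladder vertices surjectively by the `m` directions; a vertex
labelled `x` takes over the cube edges in direction `x`. For (i), route every ordered pair of
vertices once around the rim of the ladder, correcting coordinate `x` whenever a vertex labelled
`x` is met, and then along the rim to the target. At each of the at most `3 N` positions of
the schedule, a vertex together with the word of *unused* letters determines the pair up to its last
rim position, so every vertex lies on at most `3 N n` routes. As every route from `A` to `B` meets
`C`, this gives `|A| |B| ≤ 3 N n |C|`. For (ii), the cube edges in one direction cut the graph into
two halves, and removing their ends on one side separates it; some direction labels at most `N / m`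
vertices of the ladder.
-/

section Separation

variable {V : Type*} {G : SimpleGraph V} {A B C S : Set V} {u v : V}

/-- A separator of `G`: a partition of the vertices into `A`, `B` and `C` without edges from `A`
to `B`. The size conditions that involve the separation constant are kept apart. -/
structure IsSeparation (G : SimpleGraph V) (A B C : Set V) : Prop where
  disjoint_sides : Disjoint A B
  disjoint_left : Disjoint A C
  disjoint_right : Disjoint B C
  union_eq_univ : A ∪ B ∪ C = Set.univ
  not_adj : ∀ a ∈ A, ∀ b ∈ B, ¬ G.Adj a b

/-- There is a walk from `u` to `v` in `G` all of whose vertices after `u` lie in `S`. Leaving `u`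
out of the condition makes this a reflexive transitive closure, with its library of lemmas. -/
abbrev ReachableWithin (G : SimpleGraph V) (S : Set V) : V → V → Prop :=
  Relation.ReflTransGen fun x y => G.Adj x y ∧ y ∈ S

theorem ReachableWithin.of_eq_or_adj (h : u = v ∨ G.Adj u v) (hv : v ∈ S) :
    ReachableWithin G S u v := by
  obtain rfl | h := h
  · exact .refl
  · exact .single ⟨h, hv⟩

theorem IsSeparation.ncard_add_ncard_add_ncard [Finite V] (h : IsSeparation G A B C) :
    A.ncard + B.ncard + C.ncard = Nat.card V := by
  rw [← Set.ncard_univ, ← h.union_eq_univ, Set.ncard_union_eq, Set.ncard_union_eq h.disjoint_sides]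
  exact Set.disjoint_union_left.2 ⟨h.disjoint_left, h.disjoint_right⟩

theorem IsSeparation.exists_mem_of_reachableWithin (h : IsSeparation G A B C) (hu : u ∈ A)
    (hv : v ∈ B) (huv : ReachableWithin G S u v) : ∃ x ∈ C, x ∈ S := by
  by_contra! hCS
  suffices hvA : v ∈ A from Set.disjoint_left.1 h.disjoint_sides hvA hv
  clear hv
  induction huv with
  | refl => exact hu
  | @tail x y _ hxy hx =>
    have hy : y ∈ A ∪ B ∪ C := h.union_eq_univ ▸ Set.mem_univ y
    rcases hy with (hy | hy) | hy
    · exact hy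
    · exact absurd hxy.1 (h.not_adj x hx y hy)
    · exact absurd hxy.2 (hCS y hy)

theorem IsSeparation.ncard_mul_ncard_le_of_route [Finite V] (h : IsSeparation G A B C)
    {route : V → V → Set V} (hroute : ∀ u v, ReachableWithin G (route u v) u v) {K : ℕ}
    (hK : ∀ x, {p : V × V | x ∈ route p.1 p.2}.ncard ≤ K) :
    A.ncard * B.ncard ≤ K * C.ncard := by
  have hsub : A ×ˢ B ⊆ ⋃ x ∈ C.toFinite.toFinset, {p : V × V | x ∈ route p.1 p.2} := by
    rintro ⟨u, v⟩ ⟨hu, hv⟩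
    simpa using h.exists_mem_of_reachableWithin hu hv (hroute u v)
  calc A.ncard * B.ncard = (A ×ˢ B).ncard := Set.ncard_prod.symm
    _ ≤ (⋃ x ∈ C.toFinite.toFinset, {p : V × V | x ∈ route p.1 p.2}).ncard :=
      Set.ncard_le_ncard hsub
    _ ≤ ∑ x ∈ C.toFinite.toFinset, {p : V × V | x ∈ route p.1 p.2}.ncard :=
      Finset.set_ncard_biUnion_le _ _
    _ ≤ C.toFinite.toFinset.card • K := Finset.sum_le_card_nsmul _ _ _ fun x _ => hK x
    _ = K * C.ncard := by rw [smul_eq_mul, mul_comm, ← Set.ncard_eq_toFinset_card]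

theorem IsSeparation.ncard_left_le_of_ncard_mul_ncard_le [Finite V] (h : IsSeparation G A B C)
    (hAB : A.ncard ≤ B.ncard) {K : ℕ} (hK : A.ncard * B.ncard ≤ K * Nat.card V * C.ncard) :
    A.ncard ≤ (2 * K + 1) * C.ncard := by
  obtain hV | hV := (Nat.card V).eq_zero_or_pos
  · have := h.ncard_add_ncard_add_ncard
    lia
  refine le_of_mul_le_mul_right ?_ hV
  calc A.ncard * Nat.card V
      = A.ncard * (A.ncard + B.ncard + C.ncard) := by rw [h.ncard_add_ncard_add_ncard]
    _ ≤ A.ncard * (B.ncard + B.ncard + C.ncard) := by gcongr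
    _ = 2 * (A.ncard * B.ncard) + A.ncard * C.ncard := by ring
    _ ≤ 2 * (K * Nat.card V * C.ncard) + Nat.card V * C.ncard := by
      gcongr
      exact Set.ncard_le_card A
    _ = (2 * K + 1) * C.ncard * Nat.card V := by ring

end Separation

section HammingReplacement

variable {α ι J : Type*} {H : SimpleGraph J} {f : J → ι}

/-- The graph of words `ι → α` (the hypercube if `α` has two letters) with every word replaced by a
copy of `H`: the edges that change coordinate `x` are attached to the vertices of the copies that
`f` labels by `x`. A label may occur several times, each occurrence carrying a parallel edge. -/
def hammingReplacement (α : Type*) (H : SimpleGraph J) (f : J → ι) :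
    SimpleGraph ((ι → α) × J) where
  Adj p q := (p.1 = q.1 ∧ H.Adj p.2 q.2) ∨
    (p.2 = q.2 ∧ p.1 ≠ q.1 ∧ ∀ x, x ≠ f p.2 → p.1 x = q.1 x)
  symm := ⟨by
    rintro ⟨w, i⟩ ⟨w', j⟩ (⟨hw, hij⟩ | ⟨rfl, hw, hagree⟩)
    · exact .inl ⟨hw.symm, hij.symm⟩
    · exact .inr ⟨rfl, hw.symm, fun x hx => (hagree x hx).symm⟩⟩
  loopless := ⟨by
    rintro ⟨w, i⟩ (⟨-, hi⟩ | ⟨-, hw, -⟩)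
    · exact H.irrefl hi
    · exact hw rfl⟩

theorem neighborSet_hammingReplacement [DecidableEq ι] (w : ι → α) (j : J) :
    (hammingReplacement α H f).neighborSet (w, j) =
      Prod.mk w '' H.neighborSet j ∪
        (fun a => (Function.update w (f j) a, j)) '' {w (f j)}ᶜ := by
  ext ⟨w', k⟩
  constructor
  · rintro (⟨rfl, hjk⟩ | ⟨rfl, hne, hagree⟩)
    · exact .inl ⟨k, hjk, rfl⟩
    · have hw' : Function.update w (f j) (w' (f j)) = w' :=
        Function.update_eq_iff.2 ⟨rfl, hagree⟩
      refine .inr ⟨w' (f j), fun ha => hne ?_, Prod.ext hw' rfl⟩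
      rw [← hw', Set.mem_singleton_iff.1 ha, Function.update_eq_self]
  · rintro (⟨i, hi, hik⟩ | ⟨a, ha, hak⟩)
    · obtain ⟨rfl, rfl⟩ := Prod.mk.inj hik
      exact .inl ⟨rfl, hi⟩
    · obtain ⟨rfl, rfl⟩ := Prod.mk.inj hak
      refine .inr ⟨rfl, fun hw => ha ?_, fun x hx => (Function.update_of_ne hx a w).symm⟩
      simpa using (congrFun hw (f j)).symm

theorem card_neighborSet_hammingReplacement [Finite α] [Finite J] (p : (ι → α) × J) :
    Nat.card ((hammingReplacement α H f).neighborSet p) =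
      Nat.card (H.neighborSet p.2) + (Nat.card α - 1) := by
  classical
  obtain ⟨w, j⟩ := p
  have hupdate : Function.Injective fun a => (Function.update w (f j) a, j) :=
    fun a b hab => Function.update_injective w (f j) (Prod.mk.inj hab).1
  have hdisj : Disjoint (Prod.mk w '' H.neighborSet j)
      ((fun a => (Function.update w (f j) a, j)) '' {w (f j)}ᶜ) := by
    rw [Set.disjoint_left]
    rintro _ ⟨i, hi, rfl⟩ ⟨a, -, ha⟩
    exact (H.ne_of_adj hi) (Prod.mk.inj ha).2
  rw [Nat.card_coe_set_eq, neighborSet_hammingReplacement, Set.ncard_union_eq hdisj,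
    Set.ncard_image_of_injective _ (Prod.mk_right_injective w),
    Set.ncard_image_of_injective _ hupdate, Set.ncard_compl, Set.ncard_singleton,
    Nat.card_coe_set_eq]

theorem isSeparation_hammingReplacement (x : ι) (T : Set α) :
    IsSeparation (hammingReplacement α H f) ({w | w x ∈ T} ×ˢ (f ⁻¹' {x})ᶜ)
      ({w | w x ∉ T} ×ˢ Set.univ) ({w | w x ∈ T} ×ˢ (f ⁻¹' {x})) where
  disjoint_sides := Set.disjoint_left.2 fun _ hA hB => hB.1 hA.1
  disjoint_left := Set.disjoint_left.2 fun _ hA hC => hA.2 hC.2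
  disjoint_right := Set.disjoint_left.2 fun _ hB hC => hB.1 hC.1
  union_eq_univ := by
    ext ⟨w, j⟩
    by_cases hw : w x ∈ T <;> by_cases hj : f j = x <;> simp [hw, hj]
  not_adj := by
    rintro ⟨w, i⟩ ⟨hw, hi⟩ ⟨w', j⟩ ⟨hw', -⟩ (⟨rfl, -⟩ | ⟨-, -, hagree⟩)
    · exact hw' hw
    · have hx : w x = w' x := hagree x (Ne.symm hi)
      exact hw' (by simpa only [Set.mem_ofPred_eq, ← hx] using hw)

theorem card_mul_ncard_setOf_apply_eq [Finite α] [Finite ι] (x : ι) (a : α) :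
    Nat.card α * {w : ι → α | w x = a}.ncard = Nat.card (ι → α) := by
  classical
  have := Fintype.ofFinite α
  have := Fintype.ofFinite ι
  have : Nonempty ι := ⟨x⟩
  have hfix : {w : ι → α | w x = a}.ncard = Fintype.card α ^ (Fintype.card ι - 1) := by
    simpa [← Set.ncard_coe_finset] using
      Fintype.card_filter_piFinset_const_eq_of_mem Finset.univ x (Finset.mem_univ a)
  rw [hfix, Nat.card_eq_fintype_card, mul_pow_sub_one Fintype.card_ne_zero,
    Nat.card_eq_fintype_card, Fintype.card_fun]

theorem exists_card_mul_ncard_preimage_le [Finite J] [Finite ι] [Nonempty ι] (f : J → ι) :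
    ∃ x, Nat.card ι * (f ⁻¹' {x}).ncard ≤ Nat.card J := by
  classical
  have := Fintype.ofFinite J
  have := Fintype.ofFinite ι
  obtain ⟨x, hx⟩ := Fintype.exists_card_fiber_le_of_card_le_nsmul (f := f)
    (b := (Fintype.card J / Fintype.card ι : ℚ)) (by rw [nsmul_eq_mul]; field_simp; rfl)
  have hpos : (0 : ℚ) < Fintype.card ι := mod_cast Fintype.card_pos
  refine ⟨x, ?_⟩
  rw [le_div_iff₀' hpos] at hx
  simpa [← Set.ncard_coe_finset, Set.preimage] using (mod_cast hx :
    Fintype.card ι * (Finset.univ.filter fun j => f j = x).card ≤ Fintype.card J)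

theorem exists_isSeparation_hammingReplacement_bool [Finite J] [Finite ι] [Nonempty ι]
    (H : SimpleGraph J) (f : J → ι) :
    ∃ A B C, IsSeparation (hammingReplacement Bool H f) A B C ∧ A.ncard + C.ncard = B.ncard ∧
      2 * B.ncard = Nat.card ((ι → Bool) × J) ∧
      2 * (Nat.card ι * C.ncard) ≤ Nat.card ((ι → Bool) × J) := by
  obtain ⟨x, hx⟩ := exists_card_mul_ncard_preimage_le f
  have hsep := isSeparation_hammingReplacement (H := H) (f := f) x {true}
  have hhalf (b : Bool) : 2 * {w : ι → Bool | w x = b}.ncard = Nat.card (ι → Bool) := by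
    simpa using card_mul_ncard_setOf_apply_eq x b
  have hB : 2 * ({w : ι → Bool | w x ∉ ({true} : Set Bool)} ×ˢ (Set.univ : Set J)).ncard =
      Nat.card ((ι → Bool) × J) := by
    have := hhalf false
    simp [Set.ncard_prod, ← mul_assoc, this]
  refine ⟨_, _, _, hsep, ?_, hB, ?_⟩
  · have := hsep.ncard_add_ncard_add_ncard
    lia
  · calc 2 * (Nat.card ι * ({w : ι → Bool | w x ∈ ({true} : Set Bool)} ×ˢ (f ⁻¹' {x})).ncard)
        = 2 * {w : ι → Bool | w x = true}.ncard * (Nat.card ι * (f ⁻¹' {x}).ncard) := by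
          rw [Set.ncard_prod]
          simp only [Set.mem_singleton_iff]
          ring
      _ ≤ Nat.card (ι → Bool) * Nat.card J := by rw [hhalf true]; gcongr
      _ = Nat.card ((ι → Bool) × J) := (Nat.card_prod _ _).symm

end HammingReplacement

section Sweep

variable {α ι : Type*} [DecidableEq ι] {N : ℕ} {H : SimpleGraph (ZMod N)} {f : ZMod N → ι}
  {u v : (ι → α) × ZMod N}

/-- The labels met in the first `t` positions when going around `ZMod N` from `i`. -/
def scannedLabels (f : ZMod N → ι) (i : ZMod N) (t : ℕ) : Finset ι :=
  (Finset.range t).image fun s : ℕ => f (i + s)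

theorem scannedLabels_succ (f : ZMod N → ι) (i : ZMod N) (t : ℕ) :
    scannedLabels f i (t + 1) = insert (f (i + t)) (scannedLabels f i t) := by
  simp [scannedLabels, Finset.range_add_one]

theorem scannedLabels_eq_univ [NeZero N] [Fintype ι] (hf : Function.Surjective f) (i : ZMod N)
    {t : ℕ} (ht : N ≤ t) : scannedLabels f i t = Finset.univ := by
  refine Finset.eq_univ_of_forall fun y => ?_
  obtain ⟨j, rfl⟩ := hf y
  refine Finset.mem_image.2 ⟨(j - i).val, ?_, by simp⟩
  exact Finset.mem_range.2 ((ZMod.val_lt _).trans_le ht)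

/-- The vertex of the route from `u` to `v` reached after scanning `q.1` labels and moving `q.2`
steps around `ZMod N`: the letters at the scanned labels are already those of `v`. -/
def waypoint (f : ZMod N → ι) (u v : (ι → α) × ZMod N) (q : ℕ × ℕ) : (ι → α) × ZMod N :=
  ((scannedLabels f u.2 q.1).piecewise v.1 u.1, u.2 + q.2)

/-- The pairs (labels scanned, steps made) at which routes are evaluated: two rounds of moves, with
the label at each position scanned before leaving it. Scanning stops after one round, since by then
all labels are known. -/
def sweepSchedule (N : ℕ) : Finset (ℕ × ℕ) :=
  (Finset.range (2 * N)).image (fun t => (t, t)) ∪ (Finset.range N).image fun t => (t + 1, t)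

/-- The canonical route from `u` to `v`. -/
def sweepRoute (f : ZMod N → ι) (u v : (ι → α) × ZMod N) : Set ((ι → α) × ZMod N) :=
  waypoint f u v '' sweepSchedule N

theorem card_sweepSchedule_le (N : ℕ) : (sweepSchedule N).card ≤ 3 * N :=
  calc (sweepSchedule N).card ≤ 2 * N + N := by
        refine (Finset.card_union_le _ _).trans (add_le_add ?_ ?_) <;>
          exact Finset.card_image_le.trans_eq (Finset.card_range _)
    _ = 3 * N := by ring

theorem waypoint_zero (f : ZMod N → ι) (u v : (ι → α) × ZMod N) : waypoint f u v (0, 0) = u :=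
  Prod.ext (Finset.piecewise_empty v.1 u.1) (by simp [waypoint])

theorem waypoint_of_le [NeZero N] [Finite ι] (hf : Function.Surjective f)
    (u v : (ι → α) × ZMod N) {q : ℕ × ℕ} (hq : N ≤ q.1) :
    waypoint f u v q = (v.1, u.2 + q.2) := by
  have := Fintype.ofFinite ι
  refine Prod.ext (funext fun y => ?_) rfl
  simp [waypoint, Finset.piecewise, scannedLabels_eq_univ hf u.2 hq]

theorem waypoint_diag_mem_sweepRoute {t : ℕ} (ht : t < 2 * N) :
    waypoint f u v (t, t) ∈ sweepRoute f u v :=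
  Set.mem_image_of_mem _ <| Finset.mem_union_left _ <|
    Finset.mem_image_of_mem _ (Finset.mem_range.2 ht)

theorem waypoint_succ_mem_sweepRoute {t : ℕ} (ht : t < N) :
    waypoint f u v (t + 1, t) ∈ sweepRoute f u v :=
  Set.mem_image_of_mem _ <| Finset.mem_union_right _ <|
    Finset.mem_image_of_mem _ (Finset.mem_range.2 ht)

theorem waypoint_eq_or_adj_scan (H : SimpleGraph (ZMod N)) (f : ZMod N → ι)
    (u v : (ι → α) × ZMod N) (t : ℕ) :
    waypoint f u v (t, t) = waypoint f u v (t + 1, t) ∨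
      (hammingReplacement α H f).Adj (waypoint f u v (t, t)) (waypoint f u v (t + 1, t)) := by
  refine or_iff_not_imp_left.2 fun hne => .inr ⟨rfl, fun hw => hne (Prod.ext hw rfl), ?_⟩
  intro y hy
  simp only [waypoint, scannedLabels_succ] at hy ⊢
  simp [Finset.piecewise, hy]

theorem waypoint_adj_move (hH : ∀ j, H.Adj j (j + 1)) (u v : (ι → α) × ZMod N) (s t : ℕ) :
    (hammingReplacement α H f).Adj (waypoint f u v (s, t)) (waypoint f u v (s, t + 1)) := by
  refine .inl ⟨rfl, ?_⟩
  simpa [waypoint, add_assoc] using hH (u.2 + t)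

theorem reachableWithin_sweepRoute_succ [NeZero N] [Finite ι] (hH : ∀ j, H.Adj j (j + 1))
    (hf : Function.Surjective f) {t : ℕ} (ht : t + 1 < 2 * N) :
    ReachableWithin (hammingReplacement α H f) (sweepRoute f u v) (waypoint f u v (t, t))
      (waypoint f u v (t + 1, t + 1)) := by
  have hscan : ReachableWithin (hammingReplacement α H f) (sweepRoute f u v)
      (waypoint f u v (t, t)) (waypoint f u v (t + 1, t)) := by
    obtain htN | htN := lt_or_ge t N
    · exact .of_eq_or_adj (waypoint_eq_or_adj_scan H f u v t) (waypoint_succ_mem_sweepRoute htN)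
    · have hdone : waypoint f u v (t, t) = waypoint f u v (t + 1, t) := by
        rw [waypoint_of_le hf u v htN, waypoint_of_le hf u v (Nat.le_succ_of_le htN)]
      exact hdone ▸ .refl
  exact hscan.tail ⟨waypoint_adj_move hH u v (t + 1) t, waypoint_diag_mem_sweepRoute ht⟩

theorem reachableWithin_sweepRoute [NeZero N] [Finite ι] (hH : ∀ j, H.Adj j (j + 1))
    (hf : Function.Surjective f) (u v : (ι → α) × ZMod N) :
    ReachableWithin (hammingReplacement α H f) (sweepRoute f u v) u v := by
  have hsweep (t : ℕ) (ht : t < 2 * N) :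
      ReachableWithin (hammingReplacement α H f) (sweepRoute f u v) u
        (waypoint f u v (t, t)) := by
    induction t with
    | zero => rw [waypoint_zero]
    | succ t ih => exact (ih (by lia)).trans (reachableWithin_sweepRoute_succ hH hf ht)
  have hd : (v.2 - u.2).val < N := ZMod.val_lt _
  have hend : waypoint f u v (N + (v.2 - u.2).val, N + (v.2 - u.2).val) = v := by
    rw [waypoint_of_le hf u v (Nat.le_add_right N (v.2 - u.2).val)]
    simp
  simpa only [hend] using hsweep (N + (v.2 - u.2).val) (by lia)

theorem ncard_setOf_mem_sweepRoute_le [NeZero N] [Finite α] [Finite ι] (f : ZMod N → ι)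
    (x : (ι → α) × ZMod N) :
    {p : ((ι → α) × ZMod N) × ((ι → α) × ZMod N) | x ∈ sweepRoute f p.1 p.2}.ncard ≤
      3 * N * Nat.card ((ι → α) × ZMod N) := by
  -- Of the letters of the two ends, `z.1` collects those that `x` does not carry.
  let decode (r : (ℕ × ℕ) × ((ι → α) × ZMod N)) : ((ι → α) × ZMod N) × ((ι → α) × ZMod N) :=
    let q := r.1
    let z := r.2
    let used := scannedLabels f (x.2 - q.2) q.1
    ((used.piecewise z.1 x.1, x.2 - q.2), (used.piecewise x.1 z.1, z.2))
  have hsub : {p : ((ι → α) × ZMod N) × ((ι → α) × ZMod N) | x ∈ sweepRoute f p.1 p.2} ⊆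
      decode '' ((sweepSchedule N : Set (ℕ × ℕ)) ×ˢ Set.univ) := by
    rintro ⟨⟨w, i⟩, ⟨w', j⟩⟩ ⟨q, hq, rfl⟩
    refine ⟨(q, ((scannedLabels f i q.1).piecewise w w', j)), ⟨hq, trivial⟩, ?_⟩
    refine Prod.ext (Prod.ext (funext fun y => ?_) (add_sub_cancel_right i (q.2 : ZMod N)))
      (Prod.ext (funext fun y => ?_) rfl) <;>
    · simp only [decode, waypoint, Finset.piecewise, add_sub_cancel_right]
      split_ifs <;> rfl
  calc {p : ((ι → α) × ZMod N) × ((ι → α) × ZMod N) | x ∈ sweepRoute f p.1 p.2}.ncard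
      ≤ (decode '' ((sweepSchedule N : Set (ℕ × ℕ)) ×ˢ Set.univ)).ncard := Set.ncard_le_ncard hsub
    _ ≤ ((sweepSchedule N : Set (ℕ × ℕ)) ×ˢ Set.univ).ncard := Set.ncard_image_le (Set.toFinite _)
    _ = (sweepSchedule N).card * Nat.card ((ι → α) × ZMod N) := by
      rw [Set.ncard_prod, Set.ncard_coe_finset, Set.ncard_univ]
    _ ≤ 3 * N * Nat.card ((ι → α) × ZMod N) := by gcongr; exact card_sweepSchedule_le N

end Sweep

theorem ncard_left_le_of_isSeparation_hammingReplacement {α ι : Type*} [Finite α] [Finite ι] {N : ℕ}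
    [NeZero N] {H : SimpleGraph (ZMod N)} {f : ZMod N → ι} (hH : ∀ j, H.Adj j (j + 1))
    (hf : Function.Surjective f) {A B C : Set ((ι → α) × ZMod N)}
    (h : IsSeparation (hammingReplacement α H f) A B C) (hAB : A.ncard ≤ B.ncard) :
    A.ncard ≤ (6 * N + 1) * C.ncard := by
  classical
  have hcross : A.ncard * B.ncard ≤ 3 * N * Nat.card ((ι → α) × ZMod N) * C.ncard :=
    h.ncard_mul_ncard_le_of_route (reachableWithin_sweepRoute hH hf)
      (ncard_setOf_mem_sweepRoute_le f)
  calc A.ncard ≤ (2 * (3 * N) + 1) * C.ncard := h.ncard_left_le_of_ncard_mul_ncard_le hAB hcross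
    _ = (6 * N + 1) * C.ncard := by ring

section MoebiusLadder

/-- The Möbius ladder on `2 * k` vertices: the cycle of that length together with its long
diagonals. -/
def moebiusLadder (k : ℕ) : SimpleGraph (ZMod (2 * k)) :=
  SimpleGraph.circulantGraph {1, (k : ZMod (2 * k))}

variable {k : ℕ}

theorem neighborSet_moebiusLadder (hk : 0 < k) (j : ZMod (2 * k)) :
    (moebiusLadder k).neighborSet j =
      (fun d : ℕ => j + (d : ZMod (2 * k))) '' ({1, k, 2 * k - 1} : Finset ℕ) := by
  have hne (d : ℕ) (h0 : 0 < d) (hd : d < 2 * k) : (d : ZMod (2 * k)) ≠ 0 := fun h =>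
    Nat.not_dvd_of_pos_of_lt h0 hd ((ZMod.natCast_eq_zero_iff d (2 * k)).1 h)
  have h1 : (1 : ZMod (2 * k)) ≠ 0 := mod_cast hne 1 (by lia) (by lia)
  have hk0 : (k : ZMod (2 * k)) ≠ 0 := hne k (by lia) (by lia)
  have hkk : (k : ZMod (2 * k)) = -k := by
    rw [eq_neg_iff_add_eq_zero, ← two_mul]
    exact_mod_cast ZMod.natCast_self (2 * k)
  have hpred : ((2 * k - 1 : ℕ) : ZMod (2 * k)) = -1 := by
    rw [eq_neg_iff_add_eq_zero, ← Nat.cast_add_one, Nat.sub_add_cancel (by lia),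
      ZMod.natCast_self]
  ext i
  simp only [moebiusLadder, SimpleGraph.mem_neighborSet, SimpleGraph.circulantGraph_adj,
    Finset.coe_insert, Finset.coe_singleton, Set.image_insert_eq, Set.image_singleton,
    Set.mem_insert_iff, Set.mem_singleton_iff, Nat.cast_one, hpred]
  grind

theorem card_neighborSet_moebiusLadder (hk : 2 ≤ k) (j : ZMod (2 * k)) :
    Nat.card ((moebiusLadder k).neighborSet j) = 3 := by
  have hlt : ∀ d ∈ ({1, k, 2 * k - 1} : Finset ℕ), d < 2 * k := by
    simp only [Finset.forall_mem_insert, Finset.mem_singleton, forall_eq]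
    lia
  have hinj : Set.InjOn (fun d : ℕ => j + (d : ZMod (2 * k))) ({1, k, 2 * k - 1} : Finset ℕ) := by
    intro a ha b hb hab
    rw [← ZMod.val_natCast_of_lt (hlt a ha), ← ZMod.val_natCast_of_lt (hlt b hb),
      add_left_cancel hab]
  rw [Nat.card_coe_set_eq, neighborSet_moebiusLadder (by lia), hinj.ncard_image,
    Set.ncard_coe_finset]
  exact Finset.card_eq_three.2 ⟨1, k, 2 * k - 1, by lia, by lia, by lia, rfl⟩

theorem moebiusLadder_adj_add_one (hk : 0 < k) (j : ZMod (2 * k)) :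
    (moebiusLadder k).Adj j (j + 1) := by
  rw [← SimpleGraph.mem_neighborSet, neighborSet_moebiusLadder hk]
  exact ⟨1, by simp, by simp⟩

end MoebiusLadder

theorem exists_four_regular_graph_separator_bounds_general (m : ℕ) (hm : 3 ≤ m) :
    ∃ (V : Type) (G : SimpleGraph V), Finite V ∧
      Nat.card V = (6 * m - 12) * 2 ^ m ∧
      (∀ v : V, Nat.card (G.neighborSet v) = 4) ∧
      (∀ A B C : Set V, IsSeparation G A B C → A.ncard ≤ B.ncard →
        A.ncard ≤ 48 * (m - 2) * C.ncard) ∧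
      (∃ A B C : Set V, IsSeparation G A B C ∧
        (6 * m - 12) * 2 ^ m ≤ 3 * A.ncard ∧
        (6 * m - 12) * 2 ^ m ≤ 3 * B.ncard ∧
        m * C.ncard ≤ (6 * m - 12) * 2 ^ m) := by
  obtain ⟨k, hk⟩ : ∃ k, k = 3 * (m - 2) := ⟨_, rfl⟩
  have : NeZero (2 * k) := ⟨by lia⟩
  have : Nonempty (Fin m) := ⟨⟨0, by lia⟩⟩
  obtain ⟨g⟩ : Nonempty (Fin m ↪ ZMod (2 * k)) :=
    Function.Embedding.nonempty_of_card_le (by rw [Fintype.card_fin, ZMod.card]; lia)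
  have hf : Function.Surjective (Function.invFun g) := Function.invFun_surjective g.injective
  have hcard : Nat.card ((Fin m → Bool) × ZMod (2 * k)) = (6 * m - 12) * 2 ^ m := by
    have hlen : 2 * k = 6 * m - 12 := by lia
    rw [Nat.card_prod, Nat.card_fun, Nat.card_fin, Nat.card_zmod, hlen, mul_comm,
      Nat.card_eq_fintype_card (α := Bool), Fintype.card_bool]
  refine ⟨_, hammingReplacement Bool (moebiusLadder k) (Function.invFun g), inferInstance, hcard,
    fun v => ?_, fun A B C h hAB => ?_, ?_⟩
  · rw [card_neighborSet_hammingReplacement, card_neighborSet_moebiusLadder (by lia),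
      Nat.card_eq_fintype_card (α := Bool), Fintype.card_bool]
  · calc A.ncard ≤ (6 * (2 * k) + 1) * C.ncard :=
          ncard_left_le_of_isSeparation_hammingReplacement
            (moebiusLadder_adj_add_one (by lia)) hf h hAB
      _ ≤ 48 * (m - 2) * C.ncard := by gcongr; lia
  · obtain ⟨A, B, C, h, hAC, hB, hC⟩ :=
      exists_isSeparation_hammingReplacement_bool (moebiusLadder k) (Function.invFun g)
    rw [hcard] at hB hC
    rw [Nat.card_fin] at hC
    have hC3 : 3 * C.ncard ≤ m * C.ncard := by gcongr
    exact ⟨A, B, C, h, by lia, by lia, by lia⟩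

/-- For every `m ≥ 6` and every `0 < c < 1/3` there is a
`4`-regular simple graph on `n = (6m − 12)·2^m` vertices such that
(i) every separator `(A, B, C)` with separation constant `c` satisfies
`48(m−2)·|C| ≥ c·n`, and (ii) there is a partition `(A, B, C)` of the vertex
set with no edge joining `A` to `B`, with `|A| ≥ n/3`, `|B| ≥ n/3` and
`m·|C| ≤ n`. -/
theorem exists_four_regular_graph_separator_bounds
    (m : ℕ) (hm : 6 ≤ m) (c : ℝ) (hc0 : 0 < c) (hc : c < 1 / 3) :
    ∃ (V : Type) (G : SimpleGraph V), Finite V ∧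
      Nat.card V = (6 * m - 12) * 2 ^ m ∧
      (∀ v : V, Nat.card (G.neighborSet v) = 4) ∧
      (∀ A B C : Set V,
        Disjoint A B → Disjoint A C → Disjoint B C → A ∪ B ∪ C = Set.univ →
        c * (((6 * m - 12) * 2 ^ m : ℕ) : ℝ) ≤ A.ncard → A.ncard ≤ B.ncard →
        (∀ a ∈ A, ∀ b ∈ B, ¬ G.Adj a b) →
        c * (((6 * m - 12) * 2 ^ m : ℕ) : ℝ) ≤ (48 * (m - 2) * C.ncard : ℕ)) ∧
      (∃ A B C : Set V,
        Disjoint A B ∧ Disjoint A C ∧ Disjoint B C ∧ A ∪ B ∪ C = Set.univ ∧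
        (∀ a ∈ A, ∀ b ∈ B, ¬ G.Adj a b) ∧
        (((6 * m - 12) * 2 ^ m : ℕ) : ℝ) / 3 ≤ A.ncard ∧
        (((6 * m - 12) * 2 ^ m : ℕ) : ℝ) / 3 ≤ B.ncard ∧
        m * C.ncard ≤ (6 * m - 12) * 2 ^ m) := by
  obtain ⟨V, G, hV, hcard, hdeg, hexp, A, B, C, h, hA, hB, hC⟩ :=
    exists_four_regular_graph_separator_bounds_general m (by lia)
  exact ⟨V, G, hV, hcard, hdeg, fun A B C hAB hAC hBC hU hcA hle hE =>
    hcA.trans (mod_cast hexp A B C ⟨hAB, hAC, hBC, hU, hE⟩ hle),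
    A, B, C, h.disjoint_sides, h.disjoint_left, h.disjoint_right, h.union_eq_univ, h.not_adj,
    (div_le_iff₀' three_pos).2 (mod_cast hA), (div_le_iff₀' three_pos).2 (mod_cast hB), hC⟩
end

section
/- For every integer m ≥ 3, the edge expansion of the cube-connected cycles graph CCC_m on n = m · 2^m vertices is at least 1/(8m); that is, every nonempty set S of vertices of CCC_m with 2|S| ≤ n satisfies 8m · |δ(S)| ≥ |S|. -/
/-- The cube-connected cycles graph `CCC_m`: vertex set `{0,1}^m × ℤ/mℤ`, with
`(v, i)` adjacent to `(v, i+1)`, to `(v, i−1)`, and to `(v + e_i, i)`, where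
`e_i` is the `i`-th standard basis vector (coordinates mod `2`, second
component mod `m`). -/
def CCC (m : ℕ) : SimpleGraph ((ZMod m → ZMod 2) × ZMod m) :=
  SimpleGraph.fromRel (fun x y =>
    (x.1 = y.1 ∧ y.2 = x.2 + 1) ∨ (x.2 = y.2 ∧ y.1 = x.1 + Pi.single x.2 1))

/-!
Every function `f` from the vertices of `CCC_m` to a metric space satisfies an `L¹` Poincaré
inequality: the sum of `dist (f x) (f y)` over all pairs of vertices is at most `m · n` times its
sum over adjacent pairs. To prove it, join `(v, i)` to `(w, j)` by going once around the cycle,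
correcting the coordinate of `v` at the cursor whenever it differs from that of `w`, and then
walking along the cycle from `(w, i)` to `(w, j)`. After `k` steps of the first phase the current
word is a hybrid of `v` and `w`, and every word is a hybrid of equally many pairs, so these paths
use all edges evenly. The expansion bound is the case where `f` is the indicator function of `S`.
-/

open Finset

section Cut

variable {V : Type*}

theorem dist_indicator_one (S : Set V) (x y : V) :
    dist (S.indicator (1 : V → ℝ) x) (S.indicator 1 y) =
      (S ×ˢ Sᶜ).indicator 1 (x, y) + (S ×ˢ Sᶜ).indicator 1 (y, x) := by
  by_cases hx : x ∈ S <;> by_cases hy : y ∈ S <;> simp [hx, hy]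

theorem sum_sum_dist_indicator_of_symmetric [Fintype V] {r : V → V → Prop} [DecidableRel r]
    (hr : ∀ x y, r x y → r y x) (S : Set V) :
    ∑ x, ∑ y with r x y, dist (S.indicator (1 : V → ℝ) x) (S.indicator 1 y) =
      2 * ({p : V × V | r p.1 p.2} ∩ S ×ˢ Sᶜ).ncard := by
  classical
  have swap : ∑ x, ∑ y with r x y, (S ×ˢ Sᶜ).indicator (1 : V × V → ℝ) (y, x) =
      ∑ x, ∑ y with r x y, (S ×ˢ Sᶜ).indicator (1 : V × V → ℝ) (x, y) :=
    sum_comm' fun x y => by simpa using ⟨hr x y, hr y x⟩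
  have count : ∑ x, ∑ y with r x y, (S ×ˢ Sᶜ).indicator (1 : V × V → ℝ) (x, y) =
      ({p : V × V | r p.1 p.2} ∩ S ×ˢ Sᶜ).ncard := by
    calc _ = ∑ p, ({p : V × V | r p.1 p.2} ∩ S ×ˢ Sᶜ).indicator (1 : V × V → ℝ) p := by
          simp only [Fintype.sum_prod_type, sum_filter, Set.indicator_apply, Set.mem_inter_iff,
            Set.mem_ofPred_eq, ite_and]
      _ = _ := by
          simp only [Set.indicator_apply, Pi.one_apply, sum_boole, ← Set.ncard_coe_finset,
            coe_filter_univ, Set.ofPred_mem_eq]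
  simp only [dist_indicator_one, sum_add_distrib, swap, count, two_mul]

theorem sum_sum_dist_indicator [Fintype V] (S : Set V) :
    ∑ x, ∑ y, dist (S.indicator (1 : V → ℝ) x) (S.indicator 1 y) =
      2 * (S.ncard * Sᶜ.ncard) := by
  simpa [Set.ncard_prod] using
    sum_sum_dist_indicator_of_symmetric (r := fun _ _ : V => True) (fun _ _ => id) S

theorem edgeBoundary_eq_image (G : SimpleGraph V) (S : Set V) :
    edgeBoundary G S = (fun p => s(p.1, p.2)) '' ({p : V × V | G.Adj p.1 p.2} ∩ S ×ˢ Sᶜ) := by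
  ext e
  constructor
  · rintro ⟨he, a, ha, b, hb, rfl⟩
    exact ⟨(a, b), ⟨he, ha, hb⟩, rfl⟩
  · rintro ⟨⟨a, b⟩, ⟨he, ha, hb⟩, rfl⟩
    exact ⟨he, a, ha, b, hb, rfl⟩

theorem injOn_sym2_mk_prod_compl (S : Set V) :
    Set.InjOn (fun p : V × V => s(p.1, p.2)) (S ×ˢ Sᶜ) := by
  rintro ⟨a, b⟩ ⟨ha, -⟩ ⟨c, d⟩ ⟨-, hd⟩ h
  rcases Sym2.eq_iff.1 h with ⟨rfl, rfl⟩ | ⟨rfl, -⟩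
  · rfl
  · exact absurd ha hd

theorem ncard_edgeBoundary (G : SimpleGraph V) (S : Set V) :
    (edgeBoundary G S).ncard = ({p : V × V | G.Adj p.1 p.2} ∩ S ×ˢ Sᶜ).ncard := by
  rw [edgeBoundary_eq_image,
    ((injOn_sym2_mk_prod_compl S).mono Set.inter_subset_right).ncard_image]

theorem sum_sum_adj_dist_indicator [Fintype V] (G : SimpleGraph V) [DecidableRel G.Adj]
    (S : Set V) :
    ∑ x, ∑ y with G.Adj x y, dist (S.indicator (1 : V → ℝ) x) (S.indicator 1 y) =
      2 * (edgeBoundary G S).ncard := by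
  rw [sum_sum_dist_indicator_of_symmetric (fun _ _ h => h.symm), ncard_edgeBoundary]

theorem ncard_le_of_sum_sum_dist_le [Fintype V] [Nonempty V] {G : SimpleGraph V}
    [DecidableRel G.Adj] {c : ℝ}
    (poincare : ∀ f : V → ℝ, ∑ x, ∑ y, dist (f x) (f y) ≤
      c * Fintype.card V * ∑ x, ∑ y with G.Adj x y, dist (f x) (f y))
    {S : Set V} (hS : 2 * S.ncard ≤ Fintype.card V) :
    S.ncard ≤ 2 * c * (edgeBoundary G S).ncard := by
  have card_le : (Fintype.card V : ℝ) ≤ 2 * Sᶜ.ncard := by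
    have := Set.ncard_add_ncard_compl S
    rw [Nat.card_eq_fintype_card] at this
    exact_mod_cast (by lia : Fintype.card V ≤ 2 * Sᶜ.ncard)
  have card_pos : (0 : ℝ) < Fintype.card V := by exact_mod_cast Fintype.card_pos
  refine le_of_mul_le_mul_left ?_ card_pos
  calc (Fintype.card V : ℝ) * S.ncard
      ≤ 2 * Sᶜ.ncard * S.ncard := by gcongr
    _ = ∑ x, ∑ y, dist (S.indicator (1 : V → ℝ) x) (S.indicator 1 y) := by
        rw [sum_sum_dist_indicator]; ring
    _ ≤ c * Fintype.card V * (2 * (edgeBoundary G S).ncard) := by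
        rw [← sum_sum_adj_dist_indicator]; exact poincare _
    _ = Fintype.card V * (2 * c * (edgeBoundary G S).ncard) := by ring

end Cut

section Cycle

variable {m : ℕ} [NeZero m]

theorem sum_range_add_natCast_s11 {M : Type*} [AddCommMonoid M] (F : ZMod m → M) (i : ZMod m) :
    ∑ k ∈ range m, F (i + k) = ∑ j, F j := by
  rw [← Equiv.sum_comp (Equiv.addLeft i) F]
  exact sum_nbij' (fun k => (k : ZMod m)) ZMod.val (by simp) (by simp [ZMod.val_lt])
    (fun k hk => ZMod.val_cast_of_lt (mem_range.1 hk)) (by simp) (by simp)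

theorem dist_le_sum_dist_add_one {E : Type*} [PseudoMetricSpace E] (g : ZMod m → E)
    (i j : ZMod m) : dist (g i) (g j) ≤ ∑ k, dist (g k) (g (k + 1)) := by
  calc dist (g i) (g j)
      ≤ ∑ k ∈ range (j - i).val, dist (g (i + k)) (g (i + k + 1)) := by
        simpa [add_assoc] using
          dist_le_range_sum_dist (fun k : ℕ => g (i + (k : ZMod m))) (j - i).val
    _ ≤ ∑ k ∈ range m, dist (g (i + k)) (g (i + k + 1)) :=
        sum_le_sum_of_subset_of_nonneg (range_subset_range.2 (ZMod.val_lt _).le)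
          fun _ _ _ => dist_nonneg
    _ = ∑ k, dist (g k) (g (k + 1)) :=
        sum_range_add_natCast_s11 (fun k => dist (g k) (g (k + 1))) i

theorem sum_sum_dist_le_sum_dist_add_one {E : Type*} [PseudoMetricSpace E] (g : ZMod m → E) :
    ∑ i, ∑ j, dist (g i) (g j) ≤ m ^ 2 * ∑ k, dist (g k) (g (k + 1)) := by
  calc ∑ i, ∑ j, dist (g i) (g j)
      ≤ ∑ _i : ZMod m, ∑ _j : ZMod m, ∑ k, dist (g k) (g (k + 1)) :=
        sum_le_sum fun i _ => sum_le_sum fun j _ => dist_le_sum_dist_add_one g i j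
    _ = m ^ 2 * ∑ k, dist (g k) (g (k + 1)) := by
        simp [ZMod.card, sq, mul_assoc]

end Cycle

section Hybrid

/-- The arc `{i, i + 1, …, i + k - 1}` of the cycle `ℤ/mℤ`: the positions already visited by a
cursor that started at `i` and has made `k` steps. -/
def cyclicArc {m : ℕ} (i : ZMod m) (k : ℕ) : Finset (ZMod m) :=
  (range k).image fun t : ℕ => i + t

theorem cyclicArc_zero {m : ℕ} (i : ZMod m) : cyclicArc i 0 = ∅ := rfl

theorem cyclicArc_succ {m : ℕ} (i : ZMod m) (k : ℕ) :
    cyclicArc i (k + 1) = insert (i + (k : ZMod m)) (cyclicArc i k) := by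
  rw [cyclicArc, range_add_one, image_insert, cyclicArc]

theorem cyclicArc_self {m : ℕ} [NeZero m] (i : ZMod m) : cyclicArc i m = univ := by
  refine eq_univ_of_forall fun j => mem_image.2 ⟨(j - i).val, ?_, ?_⟩
  · exact mem_range.2 (ZMod.val_lt _)
  · simp

theorem sum_sum_piecewise {ι M : Type*} {α : ι → Type*} [Fintype ι] [DecidableEq ι]
    [∀ i, Fintype (α i)] [AddCommMonoid M] (s : Finset ι) (F : (∀ i, α i) → M) :
    ∑ v, ∑ w, F (s.piecewise w v) = Fintype.card (∀ i, α i) • ∑ u, F u := by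
  -- Exchanging the coordinates in `s` permutes the pairs `(v, w)`, and the mixed word becomes the
  -- first word of the new pair.
  have exchange : Function.Involutive fun p : (∀ i, α i) × (∀ i, α i) =>
      (s.piecewise p.2 p.1, s.piecewise p.1 p.2) := by
    rintro ⟨v, w⟩
    ext i <;> by_cases hi : i ∈ s <;> simp [hi]
  calc ∑ v, ∑ w, F (s.piecewise w v)
      = ∑ p : (∀ i, α i) × (∀ i, α i), F (s.piecewise p.2 p.1) := by rw [Fintype.sum_prod_type]
    _ = ∑ p : (∀ i, α i) × (∀ i, α i), F p.1 :=
        Equiv.sum_comp exchange.toPerm fun p => F p.1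
    _ = Fintype.card (∀ i, α i) • ∑ u, F u := by
        simp [Fintype.sum_prod_type, sum_const, sum_nsmul]

theorem update_eq_self_or_add_single {ι : Type*} [DecidableEq ι] (u : ι → ZMod 2) (j : ι)
    (c : ZMod 2) : Function.update u j c = u ∨ Function.update u j c = u + Pi.single j 1 := by
  have eq_or_add_one : ∀ a b : ZMod 2, b = a ∨ b = a + 1 := by decide
  refine (eq_or_add_one (u j) c).imp (fun h => ?_) fun h => ?_
  · rw [h, Function.update_eq_self]
  · ext k
    rcases eq_or_ne k j with rfl | hk <;> simp [*]

/-- The word on the path from `v` to `w` that starts with the cursor at `i`, after `k` steps: the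
coordinates in the arc already visited come from `w`, the others still from `v`. -/
def hybrid {m : ℕ} {α : Type*} (v w : ZMod m → α) (i : ZMod m) (k : ℕ) : ZMod m → α :=
  (cyclicArc i k).piecewise w v

theorem hybrid_zero {m : ℕ} {α : Type*} (v w : ZMod m → α) (i : ZMod m) :
    hybrid v w i 0 = v :=
  piecewise_empty w v

theorem hybrid_self {m : ℕ} [NeZero m] {α : Type*} (v w : ZMod m → α) (i : ZMod m) :
    hybrid v w i m = w := by
  ext j
  simp [hybrid, cyclicArc_self]

theorem hybrid_succ {m : ℕ} {α : Type*} (v w : ZMod m → α) (i : ZMod m) (k : ℕ) :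
    hybrid v w i (k + 1) = Function.update (hybrid v w i k) (i + k) (w (i + k)) := by
  rw [hybrid, cyclicArc_succ, piecewise_insert, hybrid]

end Hybrid

namespace CCC

/-- The vertices of `CCC m`: a word in `{0,1}^m` and a cursor in `ℤ/mℤ`. -/
abbrev Vertex (m : ℕ) : Type := (ZMod m → ZMod 2) × ZMod m

/-- The move along a cycle edge: the cursor advances by one. -/
def next {m : ℕ} : Equiv.Perm (Vertex m) :=
  (Equiv.refl _).prodCongr (Equiv.addRight 1)

/-- The move along a cube edge: the coordinate at the cursor is flipped. -/
def flip {m : ℕ} (x : Vertex m) : Vertex m := (x.1 + Pi.single x.2 1, x.2)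

theorem card_vertex (m : ℕ) [NeZero m] : Fintype.card (Vertex m) = m * 2 ^ m := by
  simp [ZMod.card, mul_comm]

section Adjacency

variable {m : ℕ} (x : Vertex m)

theorem flip_ne_self : flip x ≠ x := by
  simp [flip, Prod.ext_iff]

theorem next_ne_self [Fact (1 < m)] : next x ≠ x := by
  simp [next, Prod.ext_iff]

theorem next_ne_flip [Fact (1 < m)] : next x ≠ flip x := by
  simp [next, flip, Prod.ext_iff]

theorem adj_flip : (CCC m).Adj x (flip x) :=
  (SimpleGraph.fromRel_adj ..).2 ⟨(flip_ne_self x).symm, Or.inl (Or.inr ⟨rfl, rfl⟩)⟩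

theorem adj_next [Fact (1 < m)] : (CCC m).Adj x (next x) :=
  (SimpleGraph.fromRel_adj ..).2 ⟨(next_ne_self x).symm, Or.inl (Or.inl ⟨rfl, rfl⟩)⟩

theorem adj_next_symm [Fact (1 < m)] : (CCC m).Adj x (next.symm x) := by
  simpa using (adj_next (next.symm x)).symm

theorem next_symm_ne_flip [Fact (1 < m)] : next.symm x ≠ flip x := by
  simp [next, flip, Prod.ext_iff]

theorem next_ne_next_symm (hm : 3 ≤ m) : next x ≠ next.symm x := by
  have two_ne_zero : (1 + 1 : ZMod m) ≠ 0 := by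
    have := (ZMod.natCast_eq_zero_iff 2 m).not.2 (Nat.not_dvd_of_pos_of_lt two_pos hm)
    norm_num
    exact_mod_cast this
  intro h
  have cursor_eq : x.2 + 1 = x.2 + -1 := congrArg Prod.snd h
  exact two_ne_zero (by linear_combination cursor_eq)

end Adjacency

section Poincare

variable {m : ℕ} {E : Type*} [PseudoMetricSpace E] (f : Vertex m → E)

theorem two_mul_sum_dist_next_add_sum_dist_flip_le [NeZero m] [DecidableRel (CCC m).Adj]
    (hm : 3 ≤ m) :
    2 * ∑ x, dist (f x) (f (next x)) + ∑ x, dist (f x) (f (flip x)) ≤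
      ∑ x, ∑ y with (CCC m).Adj x y, dist (f x) (f y) := by
  have : Fact (1 < m) := ⟨by lia⟩
  have backward : ∑ x, dist (f x) (f (next.symm x)) = ∑ x, dist (f x) (f (next x)) := by
    rw [← Equiv.sum_comp next]
    simp only [Equiv.symm_apply_apply, dist_comm]
  rw [two_mul]
  nth_rw 2 [← backward]
  rw [← sum_add_distrib, ← sum_add_distrib]
  refine sum_le_sum fun x _ => ?_
  have neighbors : ({next x, next.symm x, flip x} : Finset (Vertex m)) ⊆
      univ.filter ((CCC m).Adj x) := by
    simp [insert_subset_iff, adj_next, adj_next_symm, adj_flip]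
  calc dist (f x) (f (next x)) + dist (f x) (f (next.symm x)) + dist (f x) (f (flip x))
      = ∑ y ∈ {next x, next.symm x, flip x}, dist (f x) (f y) := by
        rw [sum_insert, sum_pair (next_symm_ne_flip x), add_assoc]
        simp [next_ne_next_symm x hm, next_ne_flip]
    _ ≤ ∑ y with (CCC m).Adj x y, dist (f x) (f y) :=
        sum_le_sum_of_subset_of_nonneg neighbors fun _ _ _ => dist_nonneg

theorem dist_update_le_dist_flip (u : ZMod m → ZMod 2) (i : ZMod m) (c : ZMod 2) :
    dist (f (u, i)) (f (Function.update u i c, i)) ≤ dist (f (u, i)) (f (flip (u, i))) := by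
  rcases update_eq_self_or_add_single u i c with h | h <;> rw [h]
  · simp
  · rfl

variable [NeZero m]

theorem dist_le_sum_dist_flip_add_dist_next (v w : ZMod m → ZMod 2) (i : ZMod m) :
    dist (f (v, i)) (f (w, i)) ≤ ∑ k ∈ range m,
      (dist (f (hybrid v w i k, i + k)) (f (flip (hybrid v w i k, i + k))) +
        dist (f (hybrid v w i (k + 1), i + k)) (f (next (hybrid v w i (k + 1), i + k)))) := by
  have path := dist_le_range_sum_dist (fun k : ℕ => f (hybrid v w i k, i + (k : ZMod m))) m
  simp only [hybrid_zero, hybrid_self, Nat.cast_zero, add_zero, ZMod.natCast_self] at path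
  refine path.trans (sum_le_sum fun k _ => ?_)
  refine (dist_triangle _ (f (hybrid v w i (k + 1), i + (k : ZMod m))) _).trans
    (add_le_add ?_ (le_of_eq ?_))
  · rw [hybrid_succ]
    exact dist_update_le_dist_flip f _ _ _
  · simp [next, add_assoc]

theorem sum_range_sum_sum_hybrid (F : Vertex m → ℝ) (i : ZMod m) (l : ℕ → ℕ) :
    ∑ k ∈ range m, ∑ v, ∑ w, F (hybrid v w i (l k), i + k) = 2 ^ m * ∑ x, F x := by
  calc ∑ k ∈ range m, ∑ v, ∑ w, F (hybrid v w i (l k), i + k)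
      = ∑ k ∈ range m, 2 ^ m * ∑ u, F (u, i + k) := by
        refine sum_congr rfl fun k _ => ?_
        simpa [ZMod.card, hybrid] using
          sum_sum_piecewise (cyclicArc i (l k)) fun u => F (u, i + (k : ZMod m))
    _ = 2 ^ m * ∑ x, F x := by
        rw [← mul_sum, sum_range_add_natCast_s11 (fun j => ∑ u, F (u, j)), Fintype.sum_prod_type_right]

theorem sum_sum_dist_le_sum_dist_flip_add_sum_dist_next (i : ZMod m) :
    ∑ v, ∑ w, dist (f (v, i)) (f (w, i)) ≤
      2 ^ m * (∑ x, dist (f x) (f (flip x)) + ∑ x, dist (f x) (f (next x))) := by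
  refine (sum_le_sum fun v _ => sum_le_sum fun w _ =>
    dist_le_sum_dist_flip_add_dist_next f v w i).trans_eq ?_
  simp_rw [sum_comm (t := range m), sum_add_distrib]
  rw [sum_range_sum_sum_hybrid (fun x => dist (f x) (f (flip x))) i fun k => k,
    sum_range_sum_sum_hybrid (fun x => dist (f x) (f (next x))) i fun k => k + 1, mul_add]

theorem sum_sum_dist_le_sum_dist_next :
    ∑ w, ∑ i, ∑ j, dist (f (w, i)) (f (w, j)) ≤ m ^ 2 * ∑ x, dist (f x) (f (next x)) := by
  rw [Fintype.sum_prod_type, mul_sum]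
  exact sum_le_sum fun w _ => sum_sum_dist_le_sum_dist_add_one fun i => f (w, i)

theorem sum_sum_dist_le_sum_dist_word_add_sum_dist_cursor :
    ∑ x, ∑ y, dist (f x) (f y) ≤
      m * ∑ i, ∑ v, ∑ w, dist (f (v, i)) (f (w, i)) +
        2 ^ m * ∑ w, ∑ i, ∑ j, dist (f (w, i)) (f (w, j)) := by
  calc ∑ x, ∑ y, dist (f x) (f y)
      = ∑ i, ∑ v, ∑ w, ∑ j, dist (f (v, i)) (f (w, j)) := by
        rw [Fintype.sum_prod_type_right]
        simp only [Fintype.sum_prod_type]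
    _ ≤ ∑ i, ∑ v, ∑ w, ∑ j, (dist (f (v, i)) (f (w, i)) + dist (f (w, i)) (f (w, j))) := by
        gcongr
        exact dist_triangle ..
    _ = _ := by
        simp only [sum_add_distrib, sum_const, card_univ, ZMod.card, Fintype.card_pi, prod_const,
          nsmul_eq_mul, Nat.cast_pow, Nat.cast_ofNat, ← mul_sum]
        congr 2
        exact sum_comm

theorem sum_sum_dist_le_sum_sum_adj_dist [DecidableRel (CCC m).Adj] (hm : 3 ≤ m) :
    ∑ x, ∑ y, dist (f x) (f y) ≤
      m * Fintype.card (Vertex m) * ∑ x, ∑ y with (CCC m).Adj x y, dist (f x) (f y) := by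
  set A := ∑ x, dist (f x) (f (next x))
  set B := ∑ x, dist (f x) (f (flip x))
  calc ∑ x, ∑ y, dist (f x) (f y)
      ≤ m * ∑ i, ∑ v, ∑ w, dist (f (v, i)) (f (w, i)) +
          2 ^ m * ∑ w, ∑ i, ∑ j, dist (f (w, i)) (f (w, j)) :=
        sum_sum_dist_le_sum_dist_word_add_sum_dist_cursor f
    _ ≤ m * ∑ _i : ZMod m, 2 ^ m * (B + A) + 2 ^ m * (m ^ 2 * A) := by
        gcongr with i
        · exact sum_sum_dist_le_sum_dist_flip_add_sum_dist_next f i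
        · exact sum_sum_dist_le_sum_dist_next f
    _ = m * Fintype.card (Vertex m) * (2 * A + B) := by
        rw [card_vertex]
        simp only [sum_const, card_univ, ZMod.card, nsmul_eq_mul]
        push_cast
        ring
    _ ≤ m * Fintype.card (Vertex m) * ∑ x, ∑ y with (CCC m).Adj x y, dist (f x) (f y) := by
        gcongr
        exact two_mul_sum_dist_next_add_sum_dist_flip_le f hm

end Poincare

end CCC

theorem ccc_expansion_general (m : ℕ) (hm : 3 ≤ m) (S : Set ((ZMod m → ZMod 2) × ZMod m))
    (hS : 2 * S.ncard ≤ m * 2 ^ m) :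
    S.ncard ≤ 2 * m * (edgeBoundary (CCC m) S).ncard := by
  classical
  have : NeZero m := ⟨by lia⟩
  rw [← CCC.card_vertex] at hS
  exact_mod_cast ncard_le_of_sum_sum_dist_le
    (fun f => CCC.sum_sum_dist_le_sum_sum_adj_dist f hm) hS

/-- For `m ≥ 3`, the edge expansion of `CCC_m` on `n = m·2^m`
vertices is at least `1/(8m)`: every nonempty vertex set `S` with `2|S| ≤ n`
satisfies `8m·|δ(S)| ≥ |S|`. -/
theorem ccc_expansion (m : ℕ) (hm : 3 ≤ m) :
    ∀ S : Set ((ZMod m → ZMod 2) × ZMod m), S.Nonempty →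
      2 * S.ncard ≤ m * 2 ^ m →
      S.ncard ≤ 8 * m * (edgeBoundary (CCC m) S).ncard := by
  intro S _ hS
  exact (ccc_expansion_general m hm S hS).trans (by gcongr; norm_num)
end
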